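/- arXiv:1604.00316 — 3 statements merged into one kernel-verified Lean document; each statement's English description precedes it below -/
import Mathlib

section
/- Let p be a positive rational number with √p irrational, and let x₁ = a₁ + b₁√p, …, xₙ = aₙ + bₙ√p where each xᵢ > 0 and all aᵢ, bᵢ are rational. Suppose there exist indices i, j ∈ {1, …, n} such that (aᵢ − bᵢ√p)(aⱼ − bⱼ√p) < 0. Then a positive real number z belongs to B(x₁, …, xₙ) if and only if z = e + f√p for some rational numbers e, f (i.e., z ∈ ℚ[√p] and z > 0). -/
/-- `R` is an axis-parallel closed rectangle with side lengths `w` (horizontal)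
and `h` (vertical), both positive. -/
def IsRect (R : Set (ℝ × ℝ)) (w h : ℝ) : Prop :=
  0 < w ∧ 0 < h ∧ ∃ x y : ℝ, R = Set.Icc x (x + w) ×ˢ Set.Icc y (y + h)

/-- The rectangle `R` is tiled by finitely many axis-parallel rectangles, each of
whose side ratios belongs to `ratios`: the tiles cover `R` and have pairwise
disjoint interiors. -/
def TiledBy (R : Set (ℝ × ℝ)) (ratios : Set ℝ) : Prop :=
  ∃ (m : ℕ) (T : Fin m → Set (ℝ × ℝ)) (w h : Fin m → ℝ),
    (∀ i, IsRect (T i) (w i) (h i)) ∧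
    (∀ i, w i / h i ∈ ratios ∨ h i / w i ∈ ratios) ∧
    (⋃ i, T i) = R ∧
    Pairwise fun i j => Disjoint (interior (T i)) (interior (T j))

/-- `BSet ratios` is the set of positive reals `z` such that some axis-parallel
rectangle with side ratio `z` can be tiled by finitely many axis-parallel
rectangles each of whose side ratio belongs to `ratios`. -/
def BSet (ratios : Set ℝ) : Set ℝ :=
  {z | ∃ (W H : ℝ) (R : Set (ℝ × ℝ)),
    IsRect R W H ∧ (z = W / H ∨ z = H / W) ∧ TiledBy R ratios}

/-!
Fix a subfield `K` of `ℝ`. For `K`-linear functionals `φ` and `ψ`, the twisted area `φ w * ψ h` of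
a `w × h` rectangle is additive under tilings, and `w / h ∈ K` holds exactly when the twisted area
is symmetric in `φ` and `ψ` for all choices of these. So tiles with ratios in `K` can only tile
rectangles with ratio in `K`.

Conversely, `BSet ratios` is closed under addition (juxtapose two rectangles of height `1`) and
under inversion, hence under multiplication by positive rationals. Call `σ z / z` the slope of
`z ∈ ℚ[√p]`, where `σ` is conjugation. Positive rational combinations of a generator of negative
slope and one of positive slope have slopes arbitrarily close to `0` from either side, and their
inverses have slopes arbitrarily close to `-∞` and `+∞`. Every positive `z` has slope between those
of two such inverses, so it is a positive rational combination of them.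
-/

open MeasureTheory Module

section Area

theorem aedisjoint_of_convex_of_disjoint_interior {E : Type*} [NormedAddCommGroup E]
    [NormedSpace ℝ E] [MeasurableSpace E] [BorelSpace E] [FiniteDimensional ℝ E]
    (μ : Measure E) [μ.IsAddHaarMeasure] {s t : Set E} (hs : Convex ℝ s) (ht : Convex ℝ t)
    (h : Disjoint (interior s) (interior t)) : AEDisjoint μ s t :=
  h.aedisjoint.congr (interior_ae_eq_of_null_frontier (hs.addHaar_frontier μ)).symm
    (interior_ae_eq_of_null_frontier (ht.addHaar_frontier μ)).symm

theorem setIntegral_Icc_prod_deriv_mul {f g f' g' : ℝ → ℝ} (hf : ∀ t, HasDerivAt f (f' t) t)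
    (hg : ∀ t, HasDerivAt g (g' t) t) (hf' : Continuous f') (hg' : Continuous g') {a b c d : ℝ}
    (hab : a ≤ b) (hcd : c ≤ d) :
    ∫ q in Set.Icc a b ×ˢ Set.Icc c d, f' q.1 * g' q.2 = (f b - f a) * (g d - g c) := by
  have integral_deriv {f f' : ℝ → ℝ} (hf : ∀ t, HasDerivAt f (f' t) t) (hf' : Continuous f')
      {a b : ℝ} (hab : a ≤ b) : ∫ t in Set.Icc a b, f' t = f b - f a := by
    rw [integral_Icc_eq_integral_Ioc, ← intervalIntegral.integral_of_le hab]
    exact intervalIntegral.integral_eq_sub_of_hasDerivAt (fun t _ => hf t)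
      (hf'.intervalIntegrable a b)
  rw [← integral_deriv hf hf' hab, ← integral_deriv hg hg' hcd]
  exact setIntegral_prod_mul f' g' _ _

variable {ι : Type*} [Fintype ι] {a b c d : ι → ℝ} {A B C D : ℝ}
  (hab : ∀ i, a i ≤ b i) (hcd : ∀ i, c i ≤ d i) (hAB : A ≤ B) (hCD : C ≤ D)
  (hcover : ⋃ i, Set.Icc (a i) (b i) ×ˢ Set.Icc (c i) (d i) = Set.Icc A B ×ˢ Set.Icc C D)
  (hdisj : Pairwise fun i j =>
    Disjoint (interior (Set.Icc (a i) (b i) ×ˢ Set.Icc (c i) (d i)))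
      (interior (Set.Icc (a j) (b j) ×ˢ Set.Icc (c j) (d j))))

include hab hcd hAB hCD hcover hdisj

theorem sum_sub_mul_sub_of_tiling_of_hasDerivAt {f g f' g' : ℝ → ℝ}
    (hf : ∀ t, HasDerivAt f (f' t) t) (hg : ∀ t, HasDerivAt g (g' t) t)
    (hf' : Continuous f') (hg' : Continuous g') :
    ∑ i, (f (b i) - f (a i)) * (g (d i) - g (c i)) = (f B - f A) * (g D - g C) := by
  have hconvex (i : ι) : Convex ℝ (Set.Icc (a i) (b i) ×ˢ Set.Icc (c i) (d i)) :=
    (convex_Icc _ _).prod (convex_Icc _ _)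
  have hint : IntegrableOn (fun q : ℝ × ℝ => f' q.1 * g' q.2)
      (Set.Icc A B ×ˢ Set.Icc C D) volume :=
    ContinuousOn.integrableOn_compact (isCompact_Icc.prod isCompact_Icc) (by fun_prop)
  rw [← setIntegral_Icc_prod_deriv_mul hf hg hf' hg' hAB hCD, ← hcover,
    integral_iUnion_ae
      (fun i => (measurableSet_Icc.prod measurableSet_Icc).nullMeasurableSet)
      (fun i j hij => aedisjoint_of_convex_of_disjoint_interior volume (hconvex i) (hconvex j)
        (hdisj hij))
      (hcover ▸ hint), tsum_fintype]
  exact Finset.sum_congr rfl fun i _ =>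
    (setIntegral_Icc_prod_deriv_mul hf hg hf' hg' (hab i) (hcd i)).symm

-- Only finitely many values of `f` and `g` occur, so polynomials can interpolate them.
theorem sum_sub_mul_sub_of_tiling (f g : ℝ → ℝ) :
    ∑ i, (f (b i) - f (a i)) * (g (d i) - g (c i)) = (f B - f A) * (g D - g C) := by
  classical
  have exists_interpolant (f : ℝ → ℝ) (s : Finset ℝ) :
      ∃ P : Polynomial ℝ, ∀ t ∈ s, P.eval t = f t :=
    ⟨Lagrange.interpolate s id f, fun _ ht =>
      Lagrange.eval_interpolate_at_node (v := id) f Function.injective_id.injOn ht⟩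
  obtain ⟨P, hP⟩ := exists_interpolant f
    ({A, B} ∪ (Finset.univ.image a ∪ Finset.univ.image b))
  obtain ⟨Q, hQ⟩ := exists_interpolant g
    ({C, D} ∪ (Finset.univ.image c ∪ Finset.univ.image d))
  have hPQ := sum_sub_mul_sub_of_tiling_of_hasDerivAt hab hcd hAB hCD hcover hdisj
    P.hasDerivAt Q.hasDerivAt P.derivative.continuous Q.derivative.continuous
  rw [hP A (by simp), hP B (by simp), hQ C (by simp), hQ D (by simp)] at hPQ
  rw [← hPQ]
  refine Finset.sum_congr rfl fun i _ => ?_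
  rw [hP (a i) (by simp), hP (b i) (by simp), hQ (c i) (by simp), hQ (d i) (by simp)]

end Area

section Ratio

theorem div_mem_subfield_iff_forall_dual {L : Type*} [Field L] (K : Subfield L) {w h : L}
    (hh : h ≠ 0) : w / h ∈ K ↔ ∀ φ ψ : Dual K L, φ w * ψ h = ψ w * φ h := by
  constructor
  · intro hmem φ ψ
    have hw : w = (⟨w / h, hmem⟩ : K) • h := by
      rw [Subfield.smul_def, smul_eq_mul, div_mul_cancel₀ _ hh]
    have map_w (χ : Dual K L) : χ w = ⟨w / h, hmem⟩ * χ h := by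
      conv_lhs => rw [hw, map_smul, smul_eq_mul]
    rw [map_w φ, map_w ψ]
    ring
  · intro hdual
    by_contra hmem
    have hw : w ∉ Submodule.span K {h} := by
      rw [Submodule.mem_span_singleton]
      rintro ⟨c, rfl⟩
      rw [Subfield.smul_def, smul_eq_mul, mul_div_cancel_right₀ _ hh] at hmem
      exact hmem c.2
    obtain ⟨φ, hφw, hφ⟩ := Submodule.exists_le_ker_of_notMem hw
    obtain ⟨ψ, hψh, -⟩ := Submodule.exists_le_ker_of_notMem
      (show h ∉ (⊥ : Submodule K L) by simpa using hh)
    have hφh : φ h = 0 := hφ (Submodule.mem_span_singleton_self h)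
    have := hdual φ ψ
    rw [hφh, mul_zero] at this
    exact mul_ne_zero hφw hψh this

theorem TiledBy.div_mem {R : Set (ℝ × ℝ)} {ratios : Set ℝ} {W H : ℝ} (hT : TiledBy R ratios)
    (hR : IsRect R W H) (K : Subfield ℝ) (hK : ratios ⊆ K) : W / H ∈ K := by
  obtain ⟨hW, hH, X, Y, rfl⟩ := hR
  obtain ⟨m, T, w, h, hrect, hratio, hcover, hdisj⟩ := hT
  choose hw hh x y hT using hrect
  obtain rfl : T = fun i => Set.Icc (x i) (x i + w i) ×ˢ Set.Icc (y i) (y i + h i) := funext hT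
  have tile_ratio_mem (i : Fin m) : w i / h i ∈ K :=
    (hratio i).elim (fun hi => hK hi) fun hi => inv_div (h i) (w i) ▸ K.inv_mem (hK hi)
  rw [div_mem_subfield_iff_forall_dual K hH.ne']
  intro φ ψ
  have sum_eq (φ ψ : Dual K ℝ) : ∑ i, φ (w i) * ψ (h i) = φ W * ψ H := by
    have := sum_sub_mul_sub_of_tiling (fun i => by linarith [hw i]) (fun i => by linarith [hh i])
      (by linarith) (by linarith) hcover hdisj (fun t => φ t) (fun t => ψ t)
    simp only [map_add, Subfield.coe_add, add_sub_cancel_left] at this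
    exact_mod_cast this
  rw [← sum_eq φ ψ, ← sum_eq ψ φ]
  exact Finset.sum_congr rfl fun i _ =>
    (div_mem_subfield_iff_forall_dual K (hh i).ne').1 (tile_ratio_mem i) φ ψ

theorem BSet.subset_subfield {ratios : Set ℝ} (K : Subfield ℝ) (hK : ratios ⊆ K) :
    BSet ratios ⊆ K := by
  rintro z ⟨W, H, R, hR, rfl | rfl, hT⟩
  · exact hT.div_mem hR K hK
  · exact inv_div W H ▸ K.inv_mem (hT.div_mem hR K hK)

end Ratio

section Tiling

variable {R R₁ R₂ : Set (ℝ × ℝ)} {ratios : Set ℝ} {w h w₁ h₁ w₂ h₂ z : ℝ}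

theorem IsRect.image_affine (hR : IsRect R w h) {c : ℝ} (hc : 0 < c) (s t : ℝ) :
    IsRect ((affineHomeomorph c s hc.ne').prodCongr (affineHomeomorph c t hc.ne') '' R)
      (c * w) (c * h) := by
  obtain ⟨hw, hh, x, y, rfl⟩ := hR
  refine ⟨mul_pos hc hw, mul_pos hc hh, c * x + s, c * y + t, ?_⟩
  rw [Homeomorph.coe_prodCongr, Set.prodMap_image_prod, affineHomeomorph_image_Icc _ _ _ _ hc,
    affineHomeomorph_image_Icc _ _ _ _ hc]
  ring_nf

theorem IsRect.image_swap (hR : IsRect R w h) : IsRect (Homeomorph.prodComm ℝ ℝ '' R) h w := by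
  obtain ⟨hw, hh, x, y, rfl⟩ := hR
  exact ⟨hh, hw, y, x, Set.image_swap_prod _ _⟩

theorem IsRect.tiledBy_self (hR : IsRect R w h) (hratio : w / h ∈ ratios) : TiledBy R ratios :=
  ⟨1, fun _ => R, fun _ => w, fun _ => h, fun _ => hR, fun _ => .inl hratio,
    Set.iUnion_const R, Subsingleton.pairwise⟩

theorem TiledBy.image (hT : TiledBy R ratios) (e : ℝ × ℝ ≃ₜ ℝ × ℝ)
    (he : ∀ S w h, IsRect S w h →
      ∃ w' h', IsRect (e '' S) w' h' ∧ (w' / h' = w / h ∨ w' / h' = h / w)) :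
    TiledBy (e '' R) ratios := by
  obtain ⟨m, T, w, h, hrect, hratio, rfl, hdisj⟩ := hT
  choose w' h' hrect' hratio' using fun i => he (T i) (w i) (h i) (hrect i)
  refine ⟨m, fun i => e '' T i, w', h', hrect', fun i => ?_, Set.image_iUnion.symm,
    fun i j hij => ?_⟩
  · rw [← inv_div (w' i) (h' i)]
    rcases hratio' i with heq | heq <;> rw [heq, inv_div]
    exacts [hratio i, (hratio i).symm]
  · simp only [← e.image_interior]
    exact (Set.disjoint_image_iff e.injective).2 (hdisj hij)

theorem TiledBy.of_isRect_of_div_eq (hT : TiledBy R₁ ratios) (h₁R : IsRect R₁ w₁ h₁)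
    (h₂R : IsRect R₂ w₂ h₂) (hratio : w₁ / h₁ = w₂ / h₂) : TiledBy R₂ ratios := by
  obtain ⟨-, hh₁, x₁, y₁, rfl⟩ := h₁R
  obtain ⟨-, hh₂, x₂, y₂, rfl⟩ := h₂R
  have hc : 0 < h₂ / h₁ := div_pos hh₂ hh₁
  have hw : h₂ / h₁ * w₁ = w₂ := by
    rw [div_mul_eq_mul_div, mul_div_assoc, hratio, mul_div_cancel₀ _ hh₂.ne']
  have hh : h₂ / h₁ * h₁ = h₂ := div_mul_cancel₀ _ hh₁.ne'
  convert hT.image ((affineHomeomorph (h₂ / h₁) (x₂ - h₂ / h₁ * x₁) hc.ne').prodCongr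
    (affineHomeomorph (h₂ / h₁) (y₂ - h₂ / h₁ * y₁) hc.ne')) fun S w h hS =>
      ⟨_, _, hS.image_affine hc _ _, .inl (mul_div_mul_left _ _ hc.ne')⟩
  rw [Homeomorph.coe_prodCongr, Set.prodMap_image_prod, affineHomeomorph_image_Icc _ _ _ _ hc,
    affineHomeomorph_image_Icc _ _ _ _ hc, mul_add, mul_add, hw, hh]
  ring_nf

theorem IsRect.tiledBy_of_div_mem_BSet (hR : IsRect R w h) (hz : w / h ∈ BSet ratios) :
    TiledBy R ratios := by
  obtain ⟨W, H, S, hS, heq | heq, hT⟩ := hz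
  · exact hT.of_isRect_of_div_eq hS hR heq.symm
  · exact (hT.image (Homeomorph.prodComm ℝ ℝ) fun S w h hS =>
      ⟨_, _, hS.image_swap, .inr rfl⟩).of_isRect_of_div_eq hS.image_swap hR heq.symm

theorem TiledBy.union (hT₁ : TiledBy R₁ ratios) (hT₂ : TiledBy R₂ ratios)
    (hdisj : Disjoint (interior R₁) (interior R₂)) : TiledBy (R₁ ∪ R₂) ratios := by
  obtain ⟨m₁, T₁, w₁, h₁, hrect₁, hratio₁, rfl, hdisj₁⟩ := hT₁
  obtain ⟨m₂, T₂, w₂, h₂, hrect₂, hratio₂, rfl, hdisj₂⟩ := hT₂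
  have hcross (i j) : Disjoint (interior (T₁ i)) (interior (T₂ j)) :=
    hdisj.mono (interior_mono (Set.subset_iUnion T₁ i)) (interior_mono (Set.subset_iUnion T₂ j))
  refine ⟨m₁ + m₂, Fin.append T₁ T₂, Fin.append w₁ w₂, Fin.append h₁ h₂,
    Fin.addCases (by simpa using hrect₁) (by simpa using hrect₂),
    Fin.addCases (by simpa using hratio₁) (by simpa using hratio₂), ?_, ?_⟩
  · rw [← finSumFinEquiv.surjective.iUnion_comp, Set.iUnion_sum]
    simp
  · intro i j
    induction i using Fin.addCases <;> induction j using Fin.addCases <;> intro hij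
    · simpa using hdisj₁ (ne_of_apply_ne _ hij)
    · simpa using hcross _ _
    · simpa using (hcross _ _).symm
    · simpa using hdisj₂ (ne_of_apply_ne _ hij)

theorem BSet.pos (hz : z ∈ BSet ratios) : 0 < z := by
  obtain ⟨W, H, R, ⟨hW, hH, -⟩, rfl | rfl, -⟩ := hz <;> positivity

theorem BSet.mem_of_mem_ratios (hz : z ∈ ratios) (hpos : 0 < z) : z ∈ BSet ratios :=
  have hR : IsRect (Set.Icc 0 (0 + z) ×ˢ Set.Icc 0 (0 + 1)) z 1 := ⟨hpos, one_pos, 0, 0, rfl⟩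
  ⟨z, 1, _, hR, .inl (div_one z).symm, hR.tiledBy_self (by rwa [div_one])⟩

theorem BSet.inv_mem (hz : z ∈ BSet ratios) : z⁻¹ ∈ BSet ratios := by
  obtain ⟨W, H, R, hR, rfl | rfl, hT⟩ := hz
  exacts [⟨W, H, R, hR, .inr (inv_div W H), hT⟩, ⟨W, H, R, hR, .inl (inv_div H W), hT⟩]

theorem BSet.add_mem {z₁ z₂ : ℝ} (h₁ : z₁ ∈ BSet ratios) (h₂ : z₂ ∈ BSet ratios) :
    z₁ + z₂ ∈ BSet ratios := by
  have hz₁ := BSet.pos h₁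
  have hz₂ := BSet.pos h₂
  have hleft : TiledBy (Set.Icc 0 z₁ ×ˢ Set.Icc 0 1) ratios :=
    IsRect.tiledBy_of_div_mem_BSet (w := z₁) (h := 1)
      ⟨hz₁, one_pos, 0, 0, by simp only [zero_add]⟩ (by rwa [div_one])
  have hright : TiledBy (Set.Icc z₁ (z₁ + z₂) ×ˢ Set.Icc 0 1) ratios :=
    IsRect.tiledBy_of_div_mem_BSet (w := z₂) (h := 1)
      ⟨hz₂, one_pos, z₁, 0, by simp only [zero_add]⟩ (by rwa [div_one])
  have hunion := hleft.union hright <| by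
    simp only [interior_prod_eq, interior_Icc]
    exact Set.disjoint_prod.2 (.inl (Set.Ioo_disjoint_Ioo.2 (by simp)))
  rw [← Set.union_prod, Set.Icc_union_Icc_eq_Icc hz₁.le (by linarith)] at hunion
  exact ⟨z₁ + z₂, 1, _, ⟨add_pos hz₁ hz₂, one_pos, 0, 0, by simp only [zero_add]⟩,
    .inl (div_one _).symm, hunion⟩

end Tiling

section Cone

variable {V : Type*} [AddCommGroup V] [Module ℚ V] {C : ConvexCone ℚ V} {φ σ : V →ₗ[ℚ] ℝ}
  {u v z : V}

theorem exists_mem_cone_slope_mem_Ioo (hu : u ∈ C) (hv : v ∈ C) (hφ : ∀ w ∈ C, 0 < φ w)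
    {m M : ℝ} (hum : σ u / φ u < m) (hmv : m < σ v / φ v) (hmM : m < M) :
    ∃ w ∈ C, m < σ w / φ w ∧ σ w / φ w < M := by
  rw [div_lt_iff₀ (hφ u hu)] at hum
  rw [lt_div_iff₀ (hφ v hv), ← sub_pos] at hmv
  obtain ⟨q, hmq, hqM⟩ := exists_rat_btwn <| (div_lt_div_iff_of_pos_right hmv).2
    (show m * φ u - σ u < m * φ u - σ u + (M - m) * φ u by nlinarith [hφ u hu])
  have hq : (0 : ℝ) < q := (div_pos (sub_pos.2 hum) hmv).trans hmq
  rw [div_lt_iff₀ hmv] at hmq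
  rw [lt_div_iff₀ hmv] at hqM
  have hw : u + q • v ∈ C := C.add_mem' hu (C.smul_mem' (mod_cast hq) hv)
  have hqφ : 0 < q * φ v := mul_pos hq (hφ v hv)
  refine ⟨u + q • v, hw, ?_, ?_⟩
  · rw [lt_div_iff₀ (hφ _ hw)]
    simp only [map_add, map_smul, Rat.smul_def]
    linarith
  · rw [div_lt_iff₀ (hφ _ hw)]
    simp only [map_add, map_smul, Rat.smul_def]
    nlinarith

theorem mem_cone_of_slope_mem_Ioo (hV : finrank ℚ V = 2) (hu : u ∈ C) (hv : v ∈ C)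
    (hφu : 0 < φ u) (hφv : 0 < φ v) (hφz : 0 < φ z)
    (huz : σ u / φ u < σ z / φ z) (hzv : σ z / φ z < σ v / φ v) : z ∈ C := by
  have huv := huz.trans hzv
  rw [div_lt_div_iff₀ ‹_› ‹_›, ← sub_pos] at huz hzv huv
  have hindep : LinearIndependent ℚ ![u, v] := by
    rw [LinearIndependent.pair_iff]
    intro α β hαβ
    have hφ : α * φ u + β * φ v = 0 := by simpa [Rat.smul_def] using congrArg φ hαβ
    have hσ : α * σ u + β * σ v = 0 := by simpa [Rat.smul_def] using congrArg σ hαβ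
    have hα : (α : ℝ) * (σ v * φ u - σ u * φ v) = 0 := by
      linear_combination σ v * hφ - φ v * hσ
    have hβ : (β : ℝ) * (σ v * φ u - σ u * φ v) = 0 := by
      linear_combination φ u * hσ - σ u * hφ
    simpa [huv.ne'] using And.intro hα hβ
  obtain ⟨α, β, rfl⟩ : ∃ α β : ℚ, α • u + β • v = z := by
    have := hindep.span_eq_top_of_card_eq_finrank (by simp [hV])
    rw [Matrix.range_cons_cons_empty] at this
    exact Submodule.mem_span_pair.1 (this ▸ Submodule.mem_top)
  simp only [map_add, map_smul, Rat.smul_def] at huz hzv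
  have hα : (0 : ℝ) < α := by
    refine pos_of_mul_pos_left (b := σ v * φ u - σ u * φ v) ?_ huv.le
    linarith
  have hβ : (0 : ℝ) < β := by
    refine pos_of_mul_pos_left (b := σ v * φ u - σ u * φ v) ?_ huv.le
    linarith
  exact C.add_mem' (C.smul_mem' (mod_cast hα) hu) (C.smul_mem' (mod_cast hβ) hv)

end Cone

section InverseClosed

theorem ratSMul_mem_of_forall_inv_mem {K : Type*} [DivisionRing K] [Algebra ℚ K]
    {C : AddSubsemigroup K} (hinv : ∀ z ∈ C, z⁻¹ ∈ C) {q : ℚ} (hq : 0 < q) {z : K}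
    (hz : z ∈ C) : q • z ∈ C := by
  have natCast_smul_mem {n : ℕ} (hn : 0 < n) {z : K} (hz : z ∈ C) : (n : ℚ) • z ∈ C := by
    induction n, hn using Nat.le_induction with
    | base => simpa using hz
    | succ n _ ih => simpa [add_smul] using C.add_mem ih hz
  have hnum : ((q.num.toNat : ℕ) : ℚ) = q.num :=
    mod_cast Int.toNat_of_nonneg (Rat.num_pos.2 hq).le
  have inv_den_smul_mem : (q.den : ℚ)⁻¹ • z ∈ C := by
    simpa [smul_inv₀] using hinv _ (natCast_smul_mem q.den_pos (hinv z hz))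
  rw [← q.num_div_den, ← hnum, div_eq_mul_inv, mul_smul]
  exact natCast_smul_mem (by simpa using hq) inv_den_smul_mem

variable {K : Type*} [Field K] [Algebra ℚ K] {C : ConvexCone ℚ K} (hinv : ∀ z ∈ C, z⁻¹ ∈ C)
  {φ σ : K →ₐ[ℚ] ℝ} (hφ : ∀ w ∈ C, 0 < φ w) {u v : K} (hu : u ∈ C) (hv : v ∈ C)
  (hσu : σ u < 0) (hσv : 0 < σ v)

include hinv hφ hu hv hσu hσv

theorem exists_mem_cone_lt_slope (M : ℝ) : ∃ w ∈ C, M < σ w / φ w := by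
  have hM : 0 < max M 1 := by positivity
  obtain ⟨w, hw, hpos, hlt⟩ := exists_mem_cone_slope_mem_Ioo (φ := φ.toLinearMap)
    (σ := σ.toLinearMap) hu hv hφ (div_neg_of_neg_of_pos hσu (hφ u hu))
    (div_pos hσv (hφ v hv)) (inv_pos.2 hM)
  refine ⟨w⁻¹, hinv w hw, (le_max_left M 1).trans_lt ?_⟩
  rw [map_inv₀, map_inv₀, inv_div_inv, ← inv_div]
  exact (lt_inv_comm₀ hM hpos).2 hlt

theorem exists_mem_cone_slope_lt (M : ℝ) : ∃ w ∈ C, σ w / φ w < M := by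
  have hM : min M (-1) < 0 := by simp
  obtain ⟨m, hlt_m, hm⟩ := exists_between
    (max_lt (div_neg_of_neg_of_pos hσu (hφ u hu)) (inv_lt_zero.2 hM))
  obtain ⟨w, hw, hlt, hneg⟩ := exists_mem_cone_slope_mem_Ioo (φ := φ.toLinearMap)
    (σ := σ.toLinearMap) hu hv hφ ((le_max_left _ _).trans_lt hlt_m)
    (hm.trans (div_pos hσv (hφ v hv))) hm
  refine ⟨w⁻¹, hinv w hw, lt_of_lt_of_le ?_ (min_le_left M (-1))⟩
  rw [map_inv₀, map_inv₀, inv_div_inv, ← inv_div]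
  exact inv_inv (min M (-1)) ▸ (inv_lt_inv_of_neg hneg (inv_lt_zero.2 hM)).2
    (((le_max_right _ _).trans_lt hlt_m).trans hlt)

theorem mem_cone_of_pos (hK : finrank ℚ K = 2) {z : K} (hz : 0 < φ z) : z ∈ C := by
  obtain ⟨u', hu', hu'z⟩ := exists_mem_cone_slope_lt hinv hφ hu hv hσu hσv (σ z / φ z)
  obtain ⟨v', hv', hzv'⟩ := exists_mem_cone_lt_slope hinv hφ hu hv hσu hσv (σ z / φ z)
  exact mem_cone_of_slope_mem_Ioo (φ := φ.toLinearMap) (σ := σ.toLinearMap) hK hu' hv'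
    (hφ u' hu') (hφ v' hv') hz hu'z hzv'

end InverseClosed

theorem BSet.image_eq_of_conj_neg_of_conj_pos {K : Type*} [Field K] [Algebra ℚ K]
    (hK : finrank ℚ K = 2) (φ σ : K →ₐ[ℚ] ℝ) {S : Set K} (hS : ∀ w ∈ S, 0 < φ w) {u v : K}
    (hu : u ∈ S) (hv : v ∈ S) (hσu : σ u < 0) (hσv : 0 < σ v) :
    BSet (φ '' S) = {z | 0 < z ∧ z ∈ Set.range φ} := by
  have hSB {w : K} (hw : w ∈ S) : φ w ∈ BSet (φ '' S) :=
    BSet.mem_of_mem_ratios (Set.mem_image_of_mem φ hw) (hS w hw)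
  let A : AddSubsemigroup K :=
    { carrier := φ ⁻¹' BSet (φ '' S)
      add_mem' := fun hz hw => by simpa using BSet.add_mem hz hw }
  have hA (z) (hz : z ∈ A) : z⁻¹ ∈ A :=
    show φ z⁻¹ ∈ _ from map_inv₀ φ z ▸ BSet.inv_mem hz
  let C : ConvexCone ℚ K :=
    { carrier := A
      smul_mem' := fun _ hq _ hz => ratSMul_mem_of_forall_inv_mem hA hq hz
      add_mem' := fun _ hz _ hw => A.add_mem hz hw }
  refine Set.Subset.antisymm (fun z hz => ⟨BSet.pos hz, ?_⟩) ?_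
  · exact BSet.subset_subfield φ.toRingHom.fieldRange (Set.image_subset_range φ S) hz
  · rintro _ ⟨hz, z, rfl⟩
    exact mem_cone_of_pos (C := C) hA (fun _ => BSet.pos) (hSB hu) (hSB hv) hσu hσv hK hz

/-- The embedding of `ℚ[√p]`, encoded as `QuadraticAlgebra ℚ p 0` (formal sums `e + f ω` with
`ω * ω = p`), into `ℝ` that sends `ω` to the real square root `s` of `p`; the choices `s = √p`
and `s = -√p` are conjugate to each other. -/
noncomputable def quadraticEmbedding {p : ℚ} (s : ℝ) (hs : s * s = p) :
    QuadraticAlgebra ℚ p 0 →ₐ[ℚ] ℝ :=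
  QuadraticAlgebra.lift ⟨s, by simpa [Rat.smul_def] using hs⟩

theorem quadraticEmbedding_apply {p : ℚ} (s : ℝ) (hs : s * s = p) (w : QuadraticAlgebra ℚ p 0) :
    quadraticEmbedding s hs w = w.re + w.im * s := by
  simp [quadraticEmbedding, Rat.smul_def]

theorem stmt_0_general {ι : Type*} {p : ℚ} (hirr : Irrational (Real.sqrt p)) {a b : ι → ℚ}
    {x : ι → ℝ} (hx : ∀ i, x i = (a i : ℝ) + (b i : ℝ) * Real.sqrt p) (hxpos : ∀ i, 0 < x i)
    (hij : ∃ i j : ι,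
      ((a i : ℝ) - (b i : ℝ) * Real.sqrt p) * ((a j : ℝ) - (b j : ℝ) * Real.sqrt p) < 0)
    {z : ℝ} (hz : 0 < z) :
    z ∈ BSet (Set.range x) ↔ ∃ e f : ℚ, z = (e : ℝ) + (f : ℝ) * Real.sqrt p := by
  obtain ⟨hp_nonsquare, hp⟩ := irrational_sqrt_ratCast_iff.1 hirr
  have : Fact (∀ r : ℚ, r ^ 2 ≠ p + 0 * r) :=
    ⟨fun r hr => hp_nonsquare ⟨r, by linear_combination -hr⟩⟩
  have hsq : √(p : ℝ) * √p = p := Real.mul_self_sqrt (mod_cast hp)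
  let φ := quadraticEmbedding (√p) hsq
  let σ := quadraticEmbedding (-√p) (by rwa [neg_mul_neg])
  let w (i : ι) : QuadraticAlgebra ℚ p 0 := ⟨a i, b i⟩
  have hφ (i : ι) : φ (w i) = x i := by rw [quadraticEmbedding_apply, hx]
  have hσ (i : ι) : σ (w i) = a i - b i * √p := by
    rw [quadraticEmbedding_apply, mul_neg, sub_eq_add_neg]
  obtain ⟨i, j, hi, hj⟩ : ∃ i j, σ (w i) < 0 ∧ 0 < σ (w j) := by
    obtain ⟨i, j, h⟩ := hij
    rw [← hσ, ← hσ, mul_neg_iff] at h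
    exact h.elim (fun h => ⟨j, i, h.2, h.1⟩) fun h => ⟨i, j, h⟩
  have hx_image : Set.range x = φ '' Set.range w := by
    rw [← Set.range_comp]
    exact congrArg Set.range (funext fun i => (hφ i).symm)
  have hB : BSet (Set.range x) = {z | 0 < z ∧ z ∈ Set.range φ} :=
    hx_image ▸ BSet.image_eq_of_conj_neg_of_conj_pos (QuadraticAlgebra.finrank_eq_two p 0) φ σ
      (Set.forall_mem_range.2 fun i => hφ i ▸ hxpos i) (Set.mem_range_self i)
      (Set.mem_range_self j) hi hj
  rw [hB]
  constructor
  · rintro ⟨-, y, rfl⟩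
    exact ⟨y.re, y.im, quadraticEmbedding_apply _ hsq y⟩
  · rintro ⟨e, f, rfl⟩
    exact ⟨hz, ⟨e, f⟩, quadraticEmbedding_apply _ hsq _⟩

/-- Theorem 1(1): if some conjugate pair has opposite signs, then
`B(x₁, …, xₙ)` consists exactly of the positive elements of `ℚ[√p]`. -/
theorem stmt_0 (p : ℚ) (hp : 0 < p) (hirr : Irrational (Real.sqrt p))
    (n : ℕ) (hn : 0 < n) (a b : Fin n → ℚ) (x : Fin n → ℝ)
    (hx : ∀ i, x i = (a i : ℝ) + (b i : ℝ) * Real.sqrt p)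
    (hxpos : ∀ i, 0 < x i)
    (hij : ∃ i j : Fin n,
      ((a i : ℝ) - (b i : ℝ) * Real.sqrt p) * ((a j : ℝ) - (b j : ℝ) * Real.sqrt p) < 0)
    (z : ℝ) (hz : 0 < z) :
    z ∈ BSet (Set.range x) ↔ ∃ e f : ℚ, z = (e : ℝ) + (f : ℝ) * Real.sqrt p := by
  exact stmt_0_general hirr hx hxpos hij hz
end

section
/- Let x₁, …, xₙ be positive real numbers. If a ∈ B(x₁, …, xₙ) and b ∈ B(x₁, …, xₙ), then a + b ∈ B(x₁, …, xₙ). -/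
/-!
A tiled rectangle stays tiled, with the same side ratios, under swapping the coordinates, scaling
and translating. Hence `z ∈ B(x₁, …, xₙ)` exactly when the rectangle `[0, z] × [0, 1]` is tiled.
Placing `[a, a + b] × [0, 1]` to the right of `[0, a] × [0, 1]` then realizes the ratio `a + b`.
-/

open Set
open scoped Pointwise

theorem vadd_set_Icc {G : Type*} [AddGroup G] [Preorder G] [AddLeftMono G] (v a b : G) :
    v +ᵥ Icc a b = Icc (v + a) (v + b) :=
  (OrderIso.addLeft v).image_Icc a b

theorem smul_set_Icc_of_pos {K E : Type*} [GroupWithZero K] [Preorder K] [Preorder E]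
    [MulAction K E] [PosSMulMono K E] [PosSMulReflectLE K E] {c : K} (hc : 0 < c) (a b : E) :
    c • Icc a b = Icc (c • a) (c • b) :=
  (OrderIso.smulRight hc).image_Icc a b

theorem isRect_iff_exists_eq_Icc {R : Set (ℝ × ℝ)} {w h : ℝ} :
    IsRect R w h ↔ 0 < w ∧ 0 < h ∧ ∃ p : ℝ × ℝ, R = Icc p (p + (w, h)) := by
  simp only [IsRect, Prod.exists, Prod.mk_add_mk, Icc_prod_Icc]

namespace IsRect

variable {R : Set (ℝ × ℝ)} {w h : ℝ}

theorem swap (hR : IsRect R w h) : IsRect (Prod.swap '' R) h w := by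
  obtain ⟨hw, hh, x, y, rfl⟩ := hR
  exact ⟨hh, hw, y, x, image_swap_prod _ _⟩

theorem vadd (hR : IsRect R w h) (v : ℝ × ℝ) : IsRect (v +ᵥ R) w h := by
  rw [isRect_iff_exists_eq_Icc] at hR ⊢
  obtain ⟨hw, hh, p, rfl⟩ := hR
  exact ⟨hw, hh, v + p, by rw [vadd_set_Icc, add_assoc]⟩

theorem smul (hR : IsRect R w h) {c : ℝ} (hc : 0 < c) : IsRect (c • R) (c * w) (c * h) := by
  rw [isRect_iff_exists_eq_Icc] at hR ⊢
  obtain ⟨hw, hh, p, rfl⟩ := hR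
  refine ⟨mul_pos hc hw, mul_pos hc hh, c • p, ?_⟩
  rw [smul_set_Icc_of_pos hc, smul_add, Prod.smul_mk c w h, smul_eq_mul, smul_eq_mul]

end IsRect

/-- `IsTile S T` says that `T` is a rectangle one of whose side ratios (width over height, or height
over width) lies in `S`, i.e. that `T` may be used in a tiling witnessing `TiledBy _ S`. -/
def IsTile (S : Set ℝ) (T : Set (ℝ × ℝ)) : Prop :=
  ∃ w h : ℝ, IsRect T w h ∧ (w / h ∈ S ∨ h / w ∈ S)

namespace IsTile

variable {S : Set ℝ} {T : Set (ℝ × ℝ)}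

theorem swap (hT : IsTile S T) : IsTile S (Prod.swap '' T) := by
  obtain ⟨w, h, hrect, hratio⟩ := hT
  exact ⟨h, w, hrect.swap, hratio.symm⟩

theorem vadd (hT : IsTile S T) (v : ℝ × ℝ) : IsTile S (v +ᵥ T) := by
  obtain ⟨w, h, hrect, hratio⟩ := hT
  exact ⟨w, h, hrect.vadd v, hratio⟩

theorem smul (hT : IsTile S T) {c : ℝ} (hc : 0 < c) : IsTile S (c • T) := by
  obtain ⟨w, h, hrect, hratio⟩ := hT
  refine ⟨c * w, c * h, hrect.smul hc, ?_⟩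
  rwa [mul_div_mul_left _ _ hc.ne', mul_div_mul_left _ _ hc.ne']

end IsTile

theorem tiledBy_of_finite {ι : Type*} [Finite ι] {S : Set ℝ} {T : ι → Set (ℝ × ℝ)}
    (htile : ∀ i, IsTile S (T i))
    (hdisj : Pairwise fun i j => Disjoint (interior (T i)) (interior (T j))) :
    TiledBy (⋃ i, T i) S := by
  obtain ⟨m, ⟨e⟩⟩ := Finite.exists_equiv_fin ι
  choose w h hrect hratio using htile
  exact ⟨m, T ∘ e.symm, w ∘ e.symm, h ∘ e.symm, fun i => hrect _, fun i => hratio _,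
    e.symm.surjective.iUnion_comp T, hdisj.comp_of_injective e.symm.injective⟩

namespace TiledBy

variable {R R' : Set (ℝ × ℝ)} {S : Set ℝ}

theorem exists_tiles (hR : TiledBy R S) :
    ∃ (m : ℕ) (T : Fin m → Set (ℝ × ℝ)), (∀ i, IsTile S (T i)) ∧ (⋃ i, T i) = R ∧
      Pairwise fun i j => Disjoint (interior (T i)) (interior (T j)) := by
  obtain ⟨m, T, w, h, hrect, hratio, hcover, hdisj⟩ := hR
  exact ⟨m, T, fun i => ⟨w i, h i, hrect i, hratio i⟩, hcover, hdisj⟩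

theorem image_s3 (hR : TiledBy R S) (e : ℝ × ℝ ≃ₜ ℝ × ℝ)
    (he : ∀ T, IsTile S T → IsTile S (e '' T)) : TiledBy (e '' R) S := by
  obtain ⟨m, T, htile, rfl, hdisj⟩ := hR.exists_tiles
  rw [image_iUnion]
  refine tiledBy_of_finite (fun i => he _ (htile i)) fun i j hij => ?_
  simp only [← e.image_interior]
  exact (disjoint_image_iff e.injective).2 (hdisj hij)

theorem swap (hR : TiledBy R S) : TiledBy (Prod.swap '' R) S :=
  hR.image_s3 (Homeomorph.prodComm ℝ ℝ) fun _ hT => hT.swap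

theorem vadd (hR : TiledBy R S) (v : ℝ × ℝ) : TiledBy (v +ᵥ R) S :=
  hR.image_s3 (Homeomorph.vadd v) fun _ hT => hT.vadd v

theorem smul (hR : TiledBy R S) {c : ℝ} (hc : 0 < c) : TiledBy (c • R) S :=
  hR.image_s3 (Homeomorph.smulOfNeZero c hc.ne') fun _ hT => hT.smul hc

theorem union_s3 (hR : TiledBy R S) (hR' : TiledBy R' S)
    (hdisj : Disjoint (interior R) (interior R')) : TiledBy (R ∪ R') S := by
  obtain ⟨m, T, htile, rfl, hT⟩ := hR.exists_tiles
  obtain ⟨m', T', htile', rfl, hT'⟩ := hR'.exists_tiles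
  have hcross (i : Fin m) (j : Fin m') : Disjoint (interior (T i)) (interior (T' j)) :=
    hdisj.mono (interior_mono (subset_iUnion T i)) (interior_mono (subset_iUnion T' j))
  have hunion : ⋃ k, Sum.elim T T' k = (⋃ i, T i) ∪ ⋃ j, T' j := iUnion_sum
  rw [← hunion]
  refine tiledBy_of_finite (Sum.forall.2 ⟨htile, htile'⟩) ?_
  rintro (i | i) (j | j) hij
  · exact hT (ne_of_apply_ne Sum.inl hij)
  · exact hcross i j
  · exact (hcross j i).symm
  · exact hT' (ne_of_apply_ne Sum.inr hij)

theorem Icc_append {x₁ x₂ x₃ y₁ y₂ : ℝ} (hx₁₂ : x₁ ≤ x₂) (hx₂₃ : x₂ ≤ x₃)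
    (hleft : TiledBy (Icc (x₁, y₁) (x₂, y₂)) S) (hright : TiledBy (Icc (x₂, y₁) (x₃, y₂)) S) :
    TiledBy (Icc (x₁, y₁) (x₃, y₂)) S := by
  simp only [← Icc_prod_Icc] at hleft hright ⊢
  rw [← Icc_union_Icc_eq_Icc hx₁₂ hx₂₃, union_prod]
  refine hleft.union_s3 hright ?_
  simp only [interior_prod_eq, interior_Icc]
  exact Disjoint.set_prod_left (by simp [Ioo_disjoint_Ioo]) _ _

theorem Icc_zero_div_one {w h : ℝ} (hR : TiledBy R S) (hrect : IsRect R w h) :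
    TiledBy (Icc 0 (w / h, 1)) S := by
  obtain ⟨_, hh, p, rfl⟩ := isRect_iff_exists_eq_Icc.1 hrect
  have htranslate : -p +ᵥ Icc p (p + (w, h)) = Icc 0 (w, h) := by
    rw [vadd_set_Icc, neg_add_cancel, neg_add_cancel_left]
  have hscale : h⁻¹ • Icc (0 : ℝ × ℝ) (w, h) = Icc 0 (w / h, 1) := by
    rw [smul_set_Icc_of_pos (inv_pos.2 hh), smul_zero, Prod.smul_mk, smul_eq_mul, smul_eq_mul,
      inv_mul_cancel₀ hh.ne', div_eq_inv_mul]
  rw [← hscale, ← htranslate]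
  exact (hR.vadd (-p)).smul (inv_pos.2 hh)

end TiledBy

theorem mem_bSet_iff {S : Set ℝ} {z : ℝ} : z ∈ BSet S ↔ 0 < z ∧ TiledBy (Icc 0 (z, 1)) S := by
  constructor
  · rintro ⟨w, h, R, hrect, rfl | rfl, hR⟩
    · exact ⟨div_pos hrect.1 hrect.2.1, hR.Icc_zero_div_one hrect⟩
    · exact ⟨div_pos hrect.2.1 hrect.1, hR.swap.Icc_zero_div_one hrect.swap⟩
  · rintro ⟨hz, hR⟩
    have hrect : IsRect (Icc 0 (z, 1)) z 1 :=
      isRect_iff_exists_eq_Icc.2 ⟨hz, one_pos, 0, by rw [zero_add]⟩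
    exact ⟨z, 1, _, hrect, Or.inl (div_one z).symm, hR⟩

theorem stmt_3_general {S : Set ℝ} {a b : ℝ} (ha : a ∈ BSet S) (hb : b ∈ BSet S) :
    a + b ∈ BSet S := by
  rw [mem_bSet_iff] at ha hb ⊢
  obtain ⟨ha_pos, ha_tiled⟩ := ha
  obtain ⟨hb_pos, hb_tiled⟩ := hb
  have hright : TiledBy (Icc (a, 0) (a + b, 1)) S := by
    simpa [vadd_set_Icc] using hb_tiled.vadd (a, 0)
  exact ⟨add_pos ha_pos hb_pos,
    ha_tiled.Icc_append ha_pos.le (le_add_of_nonneg_right hb_pos.le) hright⟩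

/-- Lemma 1: `B(x₁, …, xₙ)` is closed under addition. -/
theorem stmt_3 (n : ℕ) (x : Fin n → ℝ) (hxpos : ∀ i, 0 < x i)
    (a b : ℝ) (ha : a ∈ BSet (Set.range x)) (hb : b ∈ BSet (Set.range x)) :
    a + b ∈ BSet (Set.range x) :=
  stmt_3_general ha hb
end

section
/- Let p be a positive rational number with √p irrational, and let A, B, C be arbitrary real numbers. For a rectangle whose side lengths are α + β√p and γ + δ√p with α, β, γ, δ ∈ ℚ, define its "area" as S := αγ·A + (βγ + αδ)·B + βδ·C (this is well defined since the rational coordinates of an element of ℚ[√p] are unique). If an axis-parallel rectangle R, both of whose side lengths lie in ℚ[√p], is tiled by finitely many axis-parallel rectangles R₁, …, R_m, each of whose side lengths also lie in ℚ[√p], then the "area" of R equals the sum of the "areas" of R₁, …, R_m. -/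
/-!
The indicator function of a half-open rectangle is a signed sum of four quadrant indicators, one
for each corner. If closed rectangles with disjoint interiors tile `R`, the corresponding half-open
rectangles partition the half-open version of `R`: membership can be tested at a point pushed
slightly up and to the right, off all the edges. Since quadrant indicators are linearly
independent, the resulting identity between indicators already holds between formal signed sums of
corners, so it may be evaluated at an arbitrary function of the corners. A bilinear function
`φ x y` of the corner `(x, y)` gives `φ w h` for a rectangle with sides `w` and `h`. The "area" is
such a `φ`: it is a bilinear form on `ℚ × ℚ`, pulled back to `ℝ` along a `ℚ`-linear left inverse of
`(a, b) ↦ a + b * θ`, which exists because `θ` is irrational.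
-/

open Set Filter Topology

theorem linearIndependent_indicator_Ici (𝕜 α : Type*) [Ring 𝕜] [PartialOrder α] :
    LinearIndependent 𝕜 (fun a : α => (Ici a).indicator (1 : α → 𝕜)) := by
  rw [linearIndependent_iff]
  intro c hc
  by_contra hne
  obtain ⟨a, ha, hmin⟩ := c.support.exists_minimal (Finsupp.support_nonempty_iff.mpr hne)
  refine Finsupp.mem_support_iff.mp ha ?_
  calc
    c a = c.sum fun b r => r * (Ici b).indicator 1 a := by
      rw [Finsupp.sum, Finset.sum_eq_single_of_mem a ha]
      · simp
      · intro b hb hba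
        have : a ∉ Ici b := fun hle => hba (hle.antisymm (hmin hb hle))
        simp [this]
    _ = Finsupp.linearCombination 𝕜 (fun b : α => (Ici b).indicator (1 : α → 𝕜)) c a := by
      simp [Finsupp.linearCombination_apply, Finsupp.sum]
    _ = 0 := congrFun hc a

section MixedDifference

variable {α β M : Type*} [AddCommGroup M]

/-- The mixed second difference of `F` over the rectangle with lower left corner `u` and upper
right corner `v`: the signed sum of the values of `F` at the four corners. -/
def mixedDifference (F : α × β → M) (u v : α × β) : M :=
  F v - F (u.1, v.2) - F (v.1, u.2) + F u

theorem map_mixedDifference {N Φ : Type*} [AddCommGroup N] [FunLike Φ M N]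
    [AddMonoidHomClass Φ M N] (L : Φ) (F : α × β → M) (u v : α × β) :
    L (mixedDifference F u v) = mixedDifference (fun a => L (F a)) u v := by
  simp only [mixedDifference, map_add, map_sub]

theorem mixedDifference_bilinear {R E₁ E₂ : Type*} [CommSemiring R] [AddCommGroup E₁]
    [AddCommGroup E₂] [Module R E₁] [Module R E₂] [Module R M] (φ : E₁ →ₗ[R] E₂ →ₗ[R] M)
    (u v : E₁ × E₂) :
    mixedDifference (fun a => φ a.1 a.2) u v = φ (v.1 - u.1) (v.2 - u.2) := by
  simp only [mixedDifference, map_sub, LinearMap.sub_apply]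
  abel

variable [PartialOrder α] [PartialOrder β] {ι : Type*} [Fintype ι]

theorem mixedDifference_eq_sum_of_indicator_Ici {U V : α × β} {u v : ι → α × β}
    (h : mixedDifference (fun a => (Ici a).indicator (1 : α × β → ℤ)) U V =
      ∑ i, mixedDifference (fun a => (Ici a).indicator (1 : α × β → ℤ)) (u i) (v i))
    (F : α × β → M) :
    mixedDifference F U V = ∑ i, mixedDifference F (u i) (v i) := by
  have formal : mixedDifference (fun a => Finsupp.single a (1 : ℤ)) U V =
      ∑ i, mixedDifference (fun a => Finsupp.single a (1 : ℤ)) (u i) (v i) := by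
    apply linearIndependent_indicator_Ici ℤ (α × β)
    simpa only [map_sum, map_mixedDifference, Finsupp.linearCombination_single, one_smul] using h
  simpa only [map_sum, map_mixedDifference, Finsupp.linearCombination_single, one_smul] using
    congrArg (Finsupp.linearCombination ℤ F) formal

end MixedDifference

/-- The half-open rectangle with lower left corner `u` and upper right corner `v`. It differs from
`Set.Ico u v` for the product order, which contains the upper and right edges apart from `v`. -/
def halfOpenRect {α β : Type*} [Preorder α] [Preorder β] (u v : α × β) : Set (α × β) :=
  Ico u.1 v.1 ×ˢ Ico u.2 v.2

section HalfOpenRect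

variable {α β : Type*} [LinearOrder α] [LinearOrder β]

theorem indicator_Ico_eq_sub {G : Type*} [AddGroup G] {a b : α} (hab : a ≤ b) (f : α → G) :
    (Ico a b).indicator f = (Ici a).indicator f - (Ici b).indicator f := by
  rw [← Ici_sdiff_Ici, indicator_sdiff (Ici_subset_Ici.mpr hab)]

theorem mixedDifference_indicator_Ici {𝕜 : Type*} [Ring 𝕜] {u v : α × β} (huv : u ≤ v) :
    mixedDifference (fun a => (Ici a).indicator (1 : α × β → 𝕜)) u v =
      (halfOpenRect u v).indicator 1 := by
  ext ⟨a, b⟩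
  simp only [mixedDifference, halfOpenRect, Pi.add_apply, Pi.sub_apply, Ici_prod_eq,
    indicator_prod_one, indicator_Ico_eq_sub huv.1, indicator_Ico_eq_sub huv.2]
  noncomm_ring

theorem eventually_nhdsGT_mem_Icc_Ioo_iff [TopologicalSpace α] [ClosedIciTopology α] (a x y : α) :
    ∀ᶠ t in 𝓝[>] a, (t ∈ Icc x y ↔ a ∈ Ico x y) ∧ (t ∈ Ioo x y ↔ a ∈ Ico x y) := by
  have eventually_lt (c : α) : ∀ᶠ t in 𝓝[>] a, a < c → t < c :=
    eventually_imp_distrib_left.mpr fun hac => nhdsWithin_le_nhds (Iio_mem_nhds hac)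
  filter_upwards [eventually_lt x, eventually_lt y, self_mem_nhdsWithin] with t hx hy ht
  grind

variable [TopologicalSpace α] [OrderTopology α] [DenselyOrdered α] [NoMinOrder α] [NoMaxOrder α]
  [TopologicalSpace β] [OrderTopology β] [DenselyOrdered β] [NoMinOrder β] [NoMaxOrder β]

theorem eventually_mem_Icc_interior_iff (p u v : α × β) :
    ∀ᶠ s in 𝓝[>] p.1 ×ˢ 𝓝[>] p.2,
      (s ∈ Icc u v ↔ p ∈ halfOpenRect u v) ∧
        (s ∈ interior (Icc u v) ↔ p ∈ halfOpenRect u v) := by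
  filter_upwards [(eventually_nhdsGT_mem_Icc_Ioo_iff p.1 u.1 v.1).prod_mk
    (eventually_nhdsGT_mem_Icc_Ioo_iff p.2 u.2 v.2)] with s ⟨⟨hIcc₁, hIoo₁⟩, hIcc₂, hIoo₂⟩
  simp only [Icc_prod_eq, interior_prod_eq, interior_Icc, mem_prod, halfOpenRect, hIcc₁, hIcc₂,
    hIoo₁, hIoo₂, and_self]

variable {ι : Type*}

theorem disjoint_halfOpenRect {u v u' v' : α × β}
    (h : Disjoint (interior (Icc u v)) (interior (Icc u' v'))) :
    Disjoint (halfOpenRect u v) (halfOpenRect u' v') := by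
  refine disjoint_left.mpr fun p hp hp' => ?_
  obtain ⟨s, hs, hs'⟩ := ((eventually_mem_Icc_interior_iff p u v).and
    (eventually_mem_Icc_interior_iff p u' v')).exists
  exact disjoint_left.mp h (hs.2.mpr hp) (hs'.2.mpr hp')

theorem iUnion_halfOpenRect_of_iUnion_Icc [Finite ι] {U V : α × β} {u v : ι → α × β}
    (h : ⋃ i, Icc (u i) (v i) = Icc U V) :
    ⋃ i, halfOpenRect (u i) (v i) = halfOpenRect U V := by
  ext p
  obtain ⟨s, hs, hs'⟩ := ((eventually_mem_Icc_interior_iff p U V).and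
    (eventually_all.mpr fun i => eventually_mem_Icc_interior_iff p (u i) (v i))).exists
  simp only [← hs.1, ← h, mem_iUnion, (hs' _).1]

theorem mixedDifference_eq_sum_of_tiling [Fintype ι] {M : Type*} [AddCommGroup M]
    {U V : α × β} {u v : ι → α × β} (hUV : U ≤ V) (huv : ∀ i, u i ≤ v i)
    (hcover : ⋃ i, Icc (u i) (v i) = Icc U V)
    (hdisj : Pairwise fun i j =>
      Disjoint (interior (Icc (u i) (v i))) (interior (Icc (u j) (v j))))
    (F : α × β → M) :
    mixedDifference F U V = ∑ i, mixedDifference F (u i) (v i) := by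
  refine mixedDifference_eq_sum_of_indicator_Ici ?_ F
  simp only [mixedDifference_indicator_Ici hUV, mixedDifference_indicator_Ici (huv _)]
  have hdisj' : ((Finset.univ : Finset ι) : Set ι).PairwiseDisjoint
      fun i => halfOpenRect (u i) (v i) :=
    fun i _ j _ hij => disjoint_halfOpenRect (hdisj hij)
  ext p
  simpa [iUnion_halfOpenRect_of_iUnion_Icc hcover] using
    congrFun (Finset.indicator_biUnion Finset.univ _ hdisj' (f := (1 : α × β → ℤ))) p

end HalfOpenRect

theorem IsRect.exists_eq_Icc {R : Set (ℝ × ℝ)} {w h : ℝ} (hR : IsRect R w h) :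
    ∃ u v : ℝ × ℝ, u ≤ v ∧ R = Icc u v ∧ v.1 - u.1 = w ∧ v.2 - u.2 = h := by
  obtain ⟨hw, hh, x, y, rfl⟩ := hR
  exact ⟨(x, y), (x + w, y + h), ⟨by simpa using hw.le, by simpa using hh.le⟩,
    Icc_prod_Icc .., by simp, by simp⟩

theorem IsRect.bilinear_eq_sum {𝕜 M ι : Type*} [CommSemiring 𝕜] [Module 𝕜 ℝ] [AddCommGroup M]
    [Module 𝕜 M] [Fintype ι] {R : Set (ℝ × ℝ)} {T : ι → Set (ℝ × ℝ)} {W H : ℝ} {w h : ι → ℝ}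
    (hR : IsRect R W H) (hT : ∀ i, IsRect (T i) (w i) (h i)) (hcover : ⋃ i, T i = R)
    (hdisj : Pairwise fun i j => Disjoint (interior (T i)) (interior (T j)))
    (φ : ℝ →ₗ[𝕜] ℝ →ₗ[𝕜] M) :
    φ W H = ∑ i, φ (w i) (h i) := by
  obtain ⟨U, V, hUV, rfl, rfl, rfl⟩ := hR.exists_eq_Icc
  choose u v huv hTuv hw hh using fun i => (hT i).exists_eq_Icc
  simp only [hTuv] at hcover hdisj
  simpa only [mixedDifference_bilinear, hw, hh] using
    mixedDifference_eq_sum_of_tiling hUV huv hcover hdisj fun a => φ a.1 a.2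

theorem exists_ratCoords_of_irrational {θ : ℝ} (hθ : Irrational θ) :
    ∃ π : ℝ →ₗ[ℚ] ℚ × ℚ, ∀ a b : ℚ, π (a + b * θ) = (a, b) := by
  let ofCoords : ℚ × ℚ →ₗ[ℚ] ℝ :=
    (LinearMap.toSpanSingleton ℚ ℝ 1).coprod (LinearMap.toSpanSingleton ℚ ℝ θ)
  have ofCoords_apply (a b : ℚ) : ofCoords (a, b) = a + b * θ := by
    simp [ofCoords, Rat.smul_def]
  have ker_eq_bot : LinearMap.ker ofCoords = ⊥ := by
    refine LinearMap.ker_eq_bot'.mpr fun ⟨a, b⟩ hab => ?_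
    rw [ofCoords_apply] at hab
    obtain rfl : b = 0 := by
      by_contra hb
      exact ((hθ.ratCast_mul hb).ratCast_add a).ne_zero hab
    simpa using hab
  obtain ⟨π, hπ⟩ := ofCoords.exists_leftInverse_of_injective ker_eq_bot
  exact ⟨π, fun a b => by rw [← ofCoords_apply]; exact LinearMap.congr_fun hπ (a, b)⟩

/-- The "area" `s₁t₁·A + (s₂t₁ + s₁t₂)·B + s₂t₂·C` as a bilinear form in the rational coordinates
`s` and `t` of the two sides of a rectangle. -/
def areaForm {M : Type*} [AddCommGroup M] [Module ℚ M] (A B C : M) :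
    ℚ × ℚ →ₗ[ℚ] ℚ × ℚ →ₗ[ℚ] M :=
  LinearMap.mk₂ ℚ
    (fun s t => (s.1 * t.1) • A + (s.2 * t.1 + s.1 * t.2) • B + (s.2 * t.2) • C)
    (fun _ _ _ => by simp only [Prod.fst_add, Prod.snd_add]; module)
    (fun _ _ _ => by simp only [Prod.smul_fst, Prod.smul_snd, smul_eq_mul]; module)
    (fun _ _ _ => by simp only [Prod.fst_add, Prod.snd_add]; module)
    (fun _ _ _ => by simp only [Prod.smul_fst, Prod.smul_snd, smul_eq_mul]; module)

theorem stmt_10_general {θ : ℝ} (hθ : Irrational θ) {M : Type*} [AddCommGroup M] [Module ℚ M]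
    (A B C : M) {α β γ δ : ℚ} {R : Set (ℝ × ℝ)} (hR : IsRect R (α + β * θ) (γ + δ * θ))
    {ι : Type*} [Fintype ι] {T : ι → Set (ℝ × ℝ)} {α' β' γ' δ' : ι → ℚ}
    (hT : ∀ i, IsRect (T i) (α' i + β' i * θ) (γ' i + δ' i * θ))
    (hcover : ⋃ i, T i = R)
    (hdisj : Pairwise fun i j => Disjoint (interior (T i)) (interior (T j))) :
    (α * γ) • A + (β * γ + α * δ) • B + (β * δ) • C =
      ∑ i, ((α' i * γ' i) • A + (β' i * γ' i + α' i * δ' i) • B + (β' i * δ' i) • C) := by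
  obtain ⟨π, hπ⟩ := exists_ratCoords_of_irrational hθ
  simpa only [LinearMap.compl₁₂_apply, hπ, areaForm, LinearMap.mk₂_apply] using
    hR.bilinear_eq_sum hT hcover hdisj ((areaForm A B C).compl₁₂ π π)

/-- Lemma 7 ("areas"): if a rectangle with side lengths in `ℚ[√p]` is tiled by
rectangles with side lengths in `ℚ[√p]`, then for the "area"
`S = αγ·A + (βγ + αδ)·B + βδ·C` of a rectangle with sides `α + β√p`, `γ + δ√p`,
the "area" of the big rectangle equals the sum of the "areas" of the tiles. -/
theorem stmt_10 (p : ℚ) (hp : 0 < p) (hirr : Irrational (Real.sqrt p))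
    (A B C : ℝ) (α β γ δ : ℚ) (R : Set (ℝ × ℝ))
    (hR : IsRect R ((α : ℝ) + (β : ℝ) * Real.sqrt p) ((γ : ℝ) + (δ : ℝ) * Real.sqrt p))
    (m : ℕ) (T : Fin m → Set (ℝ × ℝ)) (α' β' γ' δ' : Fin m → ℚ)
    (hT : ∀ i, IsRect (T i)
      ((α' i : ℝ) + (β' i : ℝ) * Real.sqrt p) ((γ' i : ℝ) + (δ' i : ℝ) * Real.sqrt p))
    (hcover : (⋃ i, T i) = R)
    (hdisj : Pairwise fun i j => Disjoint (interior (T i)) (interior (T j))) :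
    ((α * γ : ℚ) : ℝ) * A + ((β * γ + α * δ : ℚ) : ℝ) * B + ((β * δ : ℚ) : ℝ) * C =
      ∑ i : Fin m, (((α' i * γ' i : ℚ) : ℝ) * A +
        ((β' i * γ' i + α' i * δ' i : ℚ) : ℝ) * B + ((β' i * δ' i : ℚ) : ℝ) * C) := by
  simpa only [Rat.smul_def] using stmt_10_general hirr A B C hR hT hcover hdisj
end
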